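/- Let (Q, Σ) be a DFA with n = |Q| satisfying hypothesis (H). Let p₁, p₂, p₃ be pairwise distinct states, b, a, d ∈ Σ letters, and q ∈ Q∖{p₁, p₂} a state such that: Qb = Q∖{p₁}, p₁b = p₂b, Qa = Q, p₁a = p₂, p₂a = p₁, Qd = Q, p₁d = p₁, p₃d = p₂, p₂d = p₃, p₃a ≠ p₃, qb ≠ p₁, Q(bad) = Q∖{q}, and Q(badb) = Q∖{p₁, qb}. Then there exists a word w over Σ with |w| ≤ 9 and |Qw| ≤ n − 3. -/

import Mathlib

/-- The image of a finite set of states `R` under a word (list of letters),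
where each letter `s` acts on states via `act s`. -/
def wordImage {Q A : Type*} [DecidableEq Q] (act : A → Q → Q) (R : Finset Q) :
    List A → Finset Q
  | [] => R
  | s :: w => wordImage act (R.image (act s)) w

/-! A state is *missing* from a set when it lies outside it. A permutation carries missing states to
missing states; a letter that excludes `p₁` and merges only `p₁` with `p₂` does so for states other
than `p₁`, `p₂`, and makes `p₁` missing besides. So it suffices to reach, just before a final `b`,
two missing states outside `{p₁, p₂}`.

If `p₁` and `x` are missing, then after `ad` so are `p₃ = p₁ad` and `xad`, and `b` can follow
as soon as `x ∉ {p₁, p₂}` and `xa ≠ p₃`. After `badb` the states `p₁` and `r = p₃b` are missing, and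
at most two further letters produce a suitable `x` while keeping `p₁` missing:
* `λ`, with `x = r`, if `r ≠ p₂` and `ra ≠ p₃`;
* `ad`, with `x = p₃`, if `r = p₂`;
* `aa`, with `x = p₃a`, if `ra = p₃` and `p₃a ≠ r`;
* `b`, with `x = rb`, if `ra = p₃`, `p₃a = r` and `rb ≠ p₂`;
* `bd`, with `x = p₃`, if `ra = p₃`, `p₃a = r` and `rb = p₂`. -/

theorem wordImage_append {Q A : Type*} [DecidableEq Q] (act : A → Q → Q) (R : Finset Q)
    (u v : List A) : wordImage act R (u ++ v) = wordImage act (wordImage act R u) v := by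
  induction u generalizing R with
  | nil => rfl
  | cons s _ ih => exact ih (R.image (act s))

theorem card_add_three_le_of_notMem {α : Type*} [Fintype α] {S : Finset α}
    {x y z : α} (hx : x ∉ S) (hy : y ∉ S) (hz : z ∉ S) (hxy : x ≠ y) (hxz : x ≠ z)
    (hyz : y ≠ z) : S.card + 3 ≤ Fintype.card α := by
  classical
  have two_lt_card_compl : 2 < Sᶜ.card :=
    Finset.two_lt_card.2 ⟨x, Finset.mem_compl.2 hx, y, Finset.mem_compl.2 hy,
      z, Finset.mem_compl.2 hz, hxy, hxz, hyz⟩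
  have := S.card_add_card_compl
  lia

theorem injective_of_image_univ_eq_univ {α : Type*} [Fintype α] [DecidableEq α] {f : α → α}
    (hf : Finset.univ.image f = Finset.univ) : Function.Injective f := by
  simpa using Finset.card_image_iff.1 (congrArg Finset.card hf)

theorem injOn_compl_singleton_of_image_univ {α : Type*} [Fintype α] [DecidableEq α] {f : α → α}
    {e p q : α} (hf : Finset.univ.image f = Finset.univ \ {e}) (hne : p ≠ q)
    (hpq : f p = f q) : Set.InjOn f {p}ᶜ := by
  have image_erase : (Finset.univ.erase p).image f = Finset.univ.image f := by
    refine (Finset.image_subset_image (Finset.erase_subset p _)).antisymm fun y hy => ?_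
    obtain ⟨x, -, rfl⟩ := Finset.mem_image.1 hy
    by_cases hx : x = p
    · exact Finset.mem_image.2 ⟨q, by simp [hne.symm], by rw [hx, hpq]⟩
    · exact Finset.mem_image_of_mem f (by simp [hx])
  have card_image : ((Finset.univ.erase p).image f).card = (Finset.univ.erase p).card := by
    rw [image_erase, hf, Finset.sdiff_singleton_eq_erase,
      Finset.card_erase_of_mem (Finset.mem_univ e), Finset.card_erase_of_mem (Finset.mem_univ p)]
  simpa [Set.compl_eq_univ_sdiff] using Finset.card_image_iff.1 card_image

theorem eq_of_injOn_compl_singleton {α β : Type*} {f : α → β} {p q x y : α}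
    (hf : Set.InjOn f {p}ᶜ) (hne : p ≠ q) (hpq : f p = f q) (hxp : x ≠ p) (hxq : x ≠ q)
    (hyx : f y = f x) : y = x := by
  by_cases hy : y = p
  · exact absurd (hf hne.symm hxp (by rw [← hpq, ← hy, hyx])).symm hxq
  · exact hf hy hxp hyx

/-- The configuration of three letters around three states that drives the argument: `b` excludes
exactly `p₁` and merges it with `p₂`, while `a` and `d` are permutations of the states, `a` swapping
`p₁` with `p₂` and moving `p₃`, and `d` fixing `p₁` and swapping `p₂` with `p₃`. -/
structure IsMergeSwapTriple {Q A : Type*} [Fintype Q] [DecidableEq Q] (act : A → Q → Q)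
    (b a d : A) (p₁ p₂ p₃ : Q) : Prop where
  ne₂₃ : p₂ ≠ p₃
  image_b : Finset.univ.image (act b) = Finset.univ \ {p₁}
  b_p₁ : act b p₁ = act b p₂
  image_a : Finset.univ.image (act a) = Finset.univ
  a_p₁ : act a p₁ = p₂
  a_p₂ : act a p₂ = p₁
  image_d : Finset.univ.image (act d) = Finset.univ
  d_p₁ : act d p₁ = p₁
  d_p₃ : act d p₃ = p₂
  d_p₂ : act d p₂ = p₃
  a_p₃_ne : act a p₃ ≠ p₃

namespace IsMergeSwapTriple

variable {Q A : Type*} [Fintype Q] [DecidableEq Q] {act : A → Q → Q} {b a d : A} {p₁ p₂ p₃ : Q}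
  {R : Finset Q} {x y : Q}

theorem ne₁₂ (H : IsMergeSwapTriple act b a d p₁ p₂ p₃) : p₁ ≠ p₂ := by
  rintro rfl
  exact H.ne₂₃ (H.d_p₁.symm.trans H.d_p₂)

theorem ne₁₃ (H : IsMergeSwapTriple act b a d p₁ p₂ p₃) : p₁ ≠ p₃ := by
  rintro rfl
  exact H.ne₂₃ (H.d_p₃.symm.trans H.d_p₁)

theorem injective_a (H : IsMergeSwapTriple act b a d p₁ p₂ p₃) : Function.Injective (act a) :=
  injective_of_image_univ_eq_univ H.image_a

theorem injective_d (H : IsMergeSwapTriple act b a d p₁ p₂ p₃) : Function.Injective (act d) :=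
  injective_of_image_univ_eq_univ H.image_d

theorem eq_of_b_eq (H : IsMergeSwapTriple act b a d p₁ p₂ p₃) (hx₁ : x ≠ p₁) (hx₂ : x ≠ p₂)
    (hyx : act b y = act b x) : y = x :=
  eq_of_injOn_compl_singleton (injOn_compl_singleton_of_image_univ H.image_b H.ne₁₂ H.b_p₁)
    H.ne₁₂ H.b_p₁ hx₁ hx₂ hyx

theorem b_ne_p₁ (H : IsMergeSwapTriple act b a d p₁ p₂ p₃) (x : Q) : act b x ≠ p₁ := by
  have : act b x ∈ Finset.univ \ {p₁} :=
    H.image_b ▸ Finset.mem_image_of_mem (act b) (Finset.mem_univ x)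
  simpa using this

theorem p₁_notMem_image_b (H : IsMergeSwapTriple act b a d p₁ p₂ p₃) (R : Finset Q) :
    p₁ ∉ R.image (act b) := by
  simp [H.b_ne_p₁]

theorem b_notMem_image (H : IsMergeSwapTriple act b a d p₁ p₂ p₃) (hx₁ : x ≠ p₁) (hx₂ : x ≠ p₂)
    (hx : x ∉ R) : act b x ∉ R.image (act b) := by
  intro hmem
  obtain ⟨y, hy, hyx⟩ := Finset.mem_image.1 hmem
  exact hx (H.eq_of_b_eq hx₁ hx₂ hyx ▸ hy)

theorem a_notMem_image (H : IsMergeSwapTriple act b a d p₁ p₂ p₃) (hx : x ∉ R) :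
    act a x ∉ R.image (act a) :=
  H.injective_a.mem_finset_image.not.2 hx

theorem d_notMem_image (H : IsMergeSwapTriple act b a d p₁ p₂ p₃) (hx : x ∉ R) :
    act d x ∉ R.image (act d) :=
  H.injective_d.mem_finset_image.not.2 hx

theorem ad_notMem_wordImage (H : IsMergeSwapTriple act b a d p₁ p₂ p₃) (hx : x ∉ R) :
    act d (act a x) ∉ wordImage act R [a, d] :=
  H.d_notMem_image (H.a_notMem_image hx)

theorem p₃_notMem_wordImage_ad (H : IsMergeSwapTriple act b a d p₁ p₂ p₃) (h₁ : p₁ ∉ R) :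
    p₃ ∉ wordImage act R [a, d] := by
  simpa only [H.a_p₁, H.d_p₂] using H.ad_notMem_wordImage h₁

theorem b_p₃_notMem_wordImage_badb (H : IsMergeSwapTriple act b a d p₁ p₂ p₃) (R : Finset Q) :
    act b p₃ ∉ wordImage act R [b, a, d, b] :=
  H.b_notMem_image H.ne₁₃.symm H.ne₂₃.symm (H.p₃_notMem_wordImage_ad (H.p₁_notMem_image_b R))

theorem card_image_b_add_three_le (H : IsMergeSwapTriple act b a d p₁ p₂ p₃) (hxy : x ≠ y)
    (hx₁ : x ≠ p₁) (hx₂ : x ≠ p₂) (hy₁ : y ≠ p₁) (hy₂ : y ≠ p₂) (hx : x ∉ R) (hy : y ∉ R) :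
    (R.image (act b)).card + 3 ≤ Fintype.card Q :=
  card_add_three_le_of_notMem (H.p₁_notMem_image_b R) (H.b_notMem_image hx₁ hx₂ hx)
    (H.b_notMem_image hy₁ hy₂ hy) (H.b_ne_p₁ x).symm (H.b_ne_p₁ y).symm
    fun hb => hxy (H.eq_of_b_eq hy₁ hy₂ hb)

theorem card_wordImage_adb_add_three_le (H : IsMergeSwapTriple act b a d p₁ p₂ p₃)
    (h₁ : p₁ ∉ R) (hx : x ∉ R) (hx₁ : x ≠ p₁) (hx₂ : x ≠ p₂) (hax : act a x ≠ p₃) :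
    (wordImage act R [a, d, b]).card + 3 ≤ Fintype.card Q := by
  have p₃_ne : p₃ ≠ act d (act a x) := fun h =>
    hx₁ (H.injective_a ((H.injective_d (H.d_p₂.trans h)).symm.trans H.a_p₁.symm))
  have ne_p₁ : act d (act a x) ≠ p₁ := fun h =>
    hx₂ (H.injective_a ((H.injective_d (h.trans H.d_p₁.symm)).trans H.a_p₂.symm))
  have ne_p₂ : act d (act a x) ≠ p₂ := fun h => hax (H.injective_d (h.trans H.d_p₃.symm))
  exact H.card_image_b_add_three_le p₃_ne H.ne₁₃.symm H.ne₂₃.symm ne_p₁ ne_p₂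
    (H.p₃_notMem_wordImage_ad h₁) (H.ad_notMem_wordImage hx)

theorem exists_wordImage_missing_of_a_b_p₃_eq (H : IsMergeSwapTriple act b a d p₁ p₂ p₃)
    (h₁ : p₁ ∉ R) (hr : act b p₃ ∉ R) (hr₂ : act b p₃ ≠ p₂) (har : act a (act b p₃) = p₃) :
    ∃ u : List A, u.length ≤ 2 ∧ p₁ ∉ wordImage act R u ∧
      ∃ x ∉ wordImage act R u, x ≠ p₁ ∧ x ≠ p₂ ∧ act a x ≠ p₃ := by
  by_cases ha₃ : act a p₃ = act b p₃
  · have hr₃ : act b p₃ ≠ p₃ := ha₃ ▸ H.a_p₃_ne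
    have hs : act b (act b p₃) ∉ R.image (act b) := H.b_notMem_image (H.b_ne_p₁ p₃) hr₂ hr
    by_cases hs₂ : act b (act b p₃) = p₂
    · have p₁_missing : p₁ ∉ wordImage act R [b, d] :=
        H.d_p₁ ▸ H.d_notMem_image (H.p₁_notMem_image_b R)
      have p₃_missing : p₃ ∉ wordImage act R [b, d] := H.d_p₂ ▸ H.d_notMem_image (hs₂ ▸ hs)
      exact ⟨[b, d], le_rfl, p₁_missing, p₃, p₃_missing, H.ne₁₃.symm, H.ne₂₃.symm, H.a_p₃_ne⟩
    · refine ⟨[b], one_le_two, H.p₁_notMem_image_b R, _, hs, H.b_ne_p₁ _, hs₂, fun h => hr₃ ?_⟩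
      exact H.eq_of_b_eq H.ne₁₃.symm H.ne₂₃.symm (H.injective_a (h.trans har.symm))
  · have p₁_missing : p₁ ∉ wordImage act R [a, a] := by
      simpa only [wordImage, H.a_p₁, H.a_p₂] using H.a_notMem_image (H.a_notMem_image h₁)
    have a_p₃_missing : act a p₃ ∉ wordImage act R [a, a] := by
      simpa only [wordImage, har] using H.a_notMem_image (H.a_notMem_image hr)
    exact ⟨[a, a], le_rfl, p₁_missing, act a p₃, a_p₃_missing,
      fun h => H.ne₂₃.symm (H.injective_a (h.trans H.a_p₂.symm)),
      fun h => H.ne₁₃.symm (H.injective_a (h.trans H.a_p₁.symm)),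
      fun h => ha₃ (H.injective_a (h.trans har.symm))⟩

theorem exists_wordImage_missing (H : IsMergeSwapTriple act b a d p₁ p₂ p₃) (h₁ : p₁ ∉ R)
    (hr : act b p₃ ∉ R) :
    ∃ u : List A, u.length ≤ 2 ∧ p₁ ∉ wordImage act R u ∧
      ∃ x ∉ wordImage act R u, x ≠ p₁ ∧ x ≠ p₂ ∧ act a x ≠ p₃ := by
  by_cases hr₂ : act b p₃ = p₂
  · have p₁_missing : p₁ ∉ wordImage act R [a, d] := by
      simpa only [hr₂, H.a_p₂, H.d_p₁] using H.ad_notMem_wordImage hr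
    exact ⟨[a, d], le_rfl, p₁_missing, p₃, H.p₃_notMem_wordImage_ad h₁, H.ne₁₃.symm,
      H.ne₂₃.symm, H.a_p₃_ne⟩
  by_cases har : act a (act b p₃) = p₃
  · exact H.exists_wordImage_missing_of_a_b_p₃_eq h₁ hr hr₂ har
  · exact ⟨[], Nat.zero_le 2, h₁, act b p₃, hr, H.b_ne_p₁ p₃, hr₂, har⟩

end IsMergeSwapTriple

theorem stmt_18_general {Q A : Type*} [Fintype Q] [DecidableEq Q] {act : A → Q → Q}
    {b a d : A} {p₁ p₂ p₃ : Q} (H : IsMergeSwapTriple act b a d p₁ p₂ p₃) :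
    ∃ w : List A, w.length ≤ 9 ∧
      (wordImage act Finset.univ w).card + 3 ≤ Fintype.card Q := by
  obtain ⟨u, hu, h₁, x, hx, hx₁, hx₂, hax⟩ := H.exists_wordImage_missing
    (H.p₁_notMem_image_b (wordImage act Finset.univ [b, a, d]))
    (H.b_p₃_notMem_wordImage_badb Finset.univ)
  refine ⟨[b, a, d, b] ++ (u ++ [a, d, b]), ?_, ?_⟩
  · simp only [List.length_append, List.length_cons, List.length_nil]
    lia
  · rw [wordImage_append, wordImage_append]
    exact H.card_wordImage_adb_add_three_le h₁ hx hx₁ hx₂ hax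

theorem stmt_18 {Q A : Type*} [Fintype Q] [DecidableEq Q] (act : A → Q → Q)
    (hH1 : ∃ w : List A, (wordImage act Finset.univ w).card ≤ Fintype.card Q - 2)
    (hH2 : ∀ w : List A, w.length ≤ 3 →
      Fintype.card Q - 2 < (wordImage act Finset.univ w).card)
    (p₁ p₂ p₃ : Q) (hp12 : p₁ ≠ p₂) (hp13 : p₁ ≠ p₃) (hp23 : p₂ ≠ p₃)
    (b a d : A) (q : Q) (hq₁ : q ≠ p₁) (hq₂ : q ≠ p₂)
    (hb : Finset.univ.image (act b) = Finset.univ \ {p₁})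
    (hb12 : act b p₁ = act b p₂)
    (ha : Finset.univ.image (act a) = Finset.univ)
    (ha1 : act a p₁ = p₂) (ha2 : act a p₂ = p₁)
    (hd : Finset.univ.image (act d) = Finset.univ)
    (hd1 : act d p₁ = p₁) (hd3 : act d p₃ = p₂) (hd2 : act d p₂ = p₃)
    (ha3 : act a p₃ ≠ p₃)
    (hqb : act b q ≠ p₁)
    (hbad : wordImage act Finset.univ [b, a, d] = Finset.univ \ {q})
    (hbadb : wordImage act Finset.univ [b, a, d, b] = Finset.univ \ {p₁, act b q}) :
    ∃ w : List A, w.length ≤ 9 ∧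
      (wordImage act Finset.univ w).card ≤ Fintype.card Q - 3 := by
  obtain ⟨w, hw, hcard⟩ := stmt_18_general
    ⟨hp23, hb, hb12, ha, ha1, ha2, hd, hd1, hd3, hd2, ha3⟩
  exact ⟨w, hw, Nat.le_sub_of_add_le hcard⟩
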